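/- For every γ > 0 and every finite set J, there exist ε > 0 and η > 0 such that the following holds. Let V = (J, (V_j)_{j∈J}, r, H) be a hypergraph system and let ν, g, g̃ be weighted hypergraphs on V. Suppose ν satisfies the H-linear forms condition within η, 0 ≤ g_e ≤ ν_e and 0 ≤ g̃_e ≤ ν_e pointwise for all e ∈ H, and (g, g̃) is an ε-discrepancy pair. Then |E[∏_{e∈H} g_e(x_e) | x ∈ V_J] − E[∏_{e∈H} g̃_e(x_e) | x ∈ V_J]| ≤ γ. -/

import Mathlib

/-!
The difference of the two counts telescopes: exchanging `g e` for `g' e` one edge at a time, it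
suffices to bound `E[∏ f e]` where one factor `f e₁ = (g e₁ - g' e₁) / 2` has small discrepancy
and the others satisfy only `|f e| ≤ ν e`.

If the other factors were bounded by `1`, one would freeze the coordinates outside `e₁`; every
other edge misses a vertex of `e₁`, so its factor is a function of a face of `e₁`, and the
discrepancy hypothesis applies. The unbounded factors are turned into bounded ones one at a time.
Write the product as `f e₂ * φ` and let `F` be the conditional expectation of `φ` given
`x_{e₂}`. By Cauchy–Schwarz `E[f e₂ * F]² ≤ E[ν e₂] * E[ν e₂ * F²]`. Here `ν e₂` may be replaced
by `1`, and `F` is dominated by the analogous conditional expectation of the `ν e`, which is close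
to `1` in `L²`, so that `F²` is, up to a small error, at most `F * t` in mean, with `t` the
truncation of `F` to `[-1, 1]`. But `E[F * t] = E[φ * t]` is the same kind of count with the
bounded function `t` in place of `f e₂`. Since the factor at `e₁` is never touched, induction on
the number of unbounded factors closes the argument, without a dense model for `g` or `g'`.

The estimate for `E[(ν e₂ - 1) * F²]` doubles the coordinates of `e₂` one after another by
Cauchy–Schwarz. Each other edge misses some vertex of `e₂`, and when that vertex is doubled the
factor `f e` is replaced by `ν e`; in the end only factors `ν e` and `ν e₂ - 1` at all vertices of
the doubled `e₂` are left, and expanding the latter gives a sum with cancelling main terms.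

Functions on `V_e` are encoded as functions on `V_J` depending only on the coordinates in `e`.
-/

open Finset

/-- The average (expectation with respect to the uniform measure) of `f` over `α`. -/
noncomputable def avg {α : Type*} [Fintype α] (f : α → ℝ) : ℝ :=
  (∑ x, f x) / (Fintype.card α)

variable {J : Type} [Fintype J] [DecidableEq J] {V : J → Type}

/-- Restriction (projection) of a full tuple `x ∈ V_J` to the coordinates in `e`. -/
def restr (e : Finset J) (x : (j : J) → V j) : (i : ↥e) → V i := fun i => x i.1

/-- Projection of a tuple indexed by `e` to the coordinates in the face `e.erase j`. -/
def faceProj {e : Finset J} (j : J) (x : (i : ↥e) → V i) :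
    (i : ↥(e.erase j)) → V i :=
  fun i => x ⟨i.1, Finset.mem_of_mem_erase i.2⟩

/-- The product `∏_{f ∈ ∂e} 1_{B_f}(x_f)` of the indicators of the sets `B_f ⊆ V_f`
over the faces `f = e.erase j`, `j ∈ e`, of `e`. -/
noncomputable def faceInd (e : Finset J)
    (B : (j : J) → Set ((i : ↥(e.erase j)) → V i)) (x : (i : ↥e) → V i) : ℝ :=
  ∏ j ∈ e, Set.indicator (B j) (fun _ => (1 : ℝ)) (faceProj j x)

/-- `(g, g')` is an `ε`-discrepancy pair on the edge `e`: for all choices of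
`B_f ⊆ V_f` (`f ∈ ∂e`), `|E[(g(x_e) - g'(x_e)) ∏_{f ∈ ∂e} 1_{B_f}(x_f)]| ≤ ε`. -/
noncomputable def EdgeDiscrepancy [∀ j, Fintype (V j)] (e : Finset J)
    (g g' : ((i : ↥e) → V i) → ℝ) (ε : ℝ) : Prop :=
  ∀ B : (j : J) → Set ((i : ↥(e.erase j)) → V i),
    |avg (fun x : (i : ↥e) → V i => (g x - g' x) * faceInd e B x)| ≤ ε

/-- `g` is upper `η`-regular on the edge `e`: for all choices of `B_f ⊆ V_f`
(`f ∈ ∂e`), `E[(g(x_e) - 1) ∏_{f ∈ ∂e} 1_{B_f}(x_f)] ≤ η`. -/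
noncomputable def EdgeUpperRegular [∀ j, Fintype (V j)] (e : Finset J)
    (g : ((i : ↥e) → V i) → ℝ) (η : ℝ) : Prop :=
  ∀ B : (j : J) → Set ((i : ↥(e.erase j)) → V i),
    avg (fun x : (i : ↥e) → V i => (g x - 1) * faceInd e B x) ≤ η

/-- `E ⊆ V_e` is the set of `r`-cliques of some `(r-1)`-uniform hypergraph: there are
sets `B_f ⊆ V_f` for the faces `f ∈ ∂e` with `1_E(x_e) = ∏_{f ∈ ∂e} 1_{B_f}(x_f)`. -/
def IsCliqueSet (e : Finset J) (E : Set ((i : ↥e) → V i)) : Prop :=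
  ∃ B : (j : J) → Set ((i : ↥(e.erase j)) → V i),
    ∀ x, x ∈ E ↔ ∀ j ∈ e, faceProj j x ∈ B j

/-- `E ⊆ V_e` has complexity at most `T`: it can be partitioned into `T` (possibly
empty) clique sets. -/
def ComplexityLE (e : Finset J) (E : Set ((i : ↥e) → V i)) (T : ℕ) : Prop :=
  ∃ P : Fin T → Set ((i : ↥e) → V i),
    (∀ i, IsCliqueSet e (P i)) ∧
    (∀ i₁ i₂, i₁ ≠ i₂ → P i₁ ∩ P i₂ = ∅) ∧
    (⋃ i, P i) = E

/-- The weighted hypergraph `ν` satisfies the `H`-linear forms condition within `η`: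
for every choice of exponents `n (e, ω) ∈ {0,1}` (`e ∈ H`, `ω ∈ {0,1}^e`),
`|E[∏_{e ∈ H} ∏_{ω ∈ {0,1}^e} ν_e(x_e^{(ω)})^{n_{e,ω}} | x⁰, x¹ ∈ V_J] - 1| ≤ η`. -/
noncomputable def HLinearForms [∀ j, Fintype (V j)] (H : Finset (Finset J))
    (ν : (e : Finset J) → ((i : ↥e) → V i) → ℝ) (η : ℝ) : Prop :=
  ∀ n : (e : Finset J) → (↥e → Bool) → Bool,
    |avg (fun x : ((j : J) → V j) × ((j : J) → V j) =>
      ∏ e ∈ H, ∏ ω : ↥e → Bool,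
        if n e ω then ν e (fun i => if ω i then x.2 i.1 else x.1 i.1) else 1) - 1| ≤ η

open Filter
open scoped BigOperators Topology

lemma avg_eq_expect {α : Type*} [Fintype α] (f : α → ℝ) : avg f = 𝔼 x, f x :=
  (Fintype.expect_eq_sum_div_card f).symm

/-! ### Averages over product spaces -/

lemma sq_expect_mul_le {α : Type*} (s : Finset α) {A M : α → ℝ} (B : α → ℝ)
    (h : ∀ x ∈ s, |A x| ≤ M x) :
    (𝔼 x ∈ s, A x * B x) ^ 2 ≤ (𝔼 x ∈ s, M x) * 𝔼 x ∈ s, M x * B x ^ 2 := by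
  have hM : ∀ x ∈ s, 0 ≤ M x := fun x hx => (abs_nonneg _).trans (h x hx)
  simp only [expect_eq_sum_div_card]
  rw [div_pow, div_mul_div_comm, ← sq]
  gcongr
  refine sum_sq_le_sum_mul_sum_of_sq_le_mul s hM
    (fun x hx => mul_nonneg (hM x hx) (sq_nonneg _)) fun x hx => ?_
  calc (A x * B x) ^ 2 = |A x| ^ 2 * B x ^ 2 := by rw [sq_abs, mul_pow]
    _ ≤ M x ^ 2 * B x ^ 2 := by gcongr; exact h x hx
    _ = M x * (M x * B x ^ 2) := by ring

lemma dependsOn_prod {ι κ : Type*} {X : ι → Type*} {I : Finset κ} {s : Set ι}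
    {f : κ → (∀ i, X i) → ℝ} (h : ∀ a ∈ I, DependsOn (f a) s) :
    DependsOn (fun x => ∏ a ∈ I, f a x) s :=
  fun _ _ hxy => prod_congr rfl fun a ha => h a ha hxy

section CondAvg

variable {ι : Type*} [DecidableEq ι] [Fintype ι] {X : ι → Type*} [∀ i, Fintype (X i)]

/-- The conditional expectation of `φ` given the coordinates in `s`, as a function on the
whole product. -/
noncomputable def condAvg (s : Finset ι) (φ : (∀ i, X i) → ℝ) (x : ∀ i, X i) : ℝ :=
  𝔼 y, φ (s.piecewise x y)

lemma dependsOn_condAvg (s : Finset ι) (φ : (∀ i, X i) → ℝ) :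
    DependsOn (condAvg s φ) (s : Set ι) := fun x x' h => by
  have hpw : ∀ y, s.piecewise x y = s.piecewise x' y := fun y =>
    s.piecewise_congr h fun _ _ => rfl
  simp only [condAvg, hpw]

lemma abs_condAvg_le (s : Finset ι) {φ ψ : (∀ i, X i) → ℝ} (h : ∀ x, |φ x| ≤ ψ x)
    (x : ∀ i, X i) : |condAvg s φ x| ≤ condAvg s ψ x :=
  (abs_expect_le _ _).trans (expect_le_expect fun _ _ => h _)

variable [∀ i, Nonempty (X i)]

lemma expect_expect_piecewise (s : Finset ι) (f : (∀ i, X i) → ℝ) :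
    𝔼 x, 𝔼 y, f (s.piecewise x y) = 𝔼 x, f x := by
  let swap : (∀ i, X i) × (∀ i, X i) → (∀ i, X i) × (∀ i, X i) := fun w =>
    (s.piecewise w.1 w.2, s.piecewise w.2 w.1)
  have hswap : Function.Involutive swap := fun w => by
    ext i <;> by_cases hi : i ∈ s <;> simp [swap, hi]
  calc 𝔼 x, 𝔼 y, f (s.piecewise x y)
      = 𝔼 w : (∀ i, X i) × (∀ i, X i), f (swap w).1 :=
        (expect_product univ univ fun w => f (swap w).1).symm
    _ = 𝔼 w : (∀ i, X i) × (∀ i, X i), f w.1 :=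
        Fintype.expect_equiv hswap.toPerm _ _ fun _ => rfl
    _ = 𝔼 x, f x := by
        rw [← univ_product_univ, expect_product]
        simp only [Fintype.expect_const]

lemma expect_mul_condAvg {s : Finset ι} {G : (∀ i, X i) → ℝ} (hG : DependsOn G (s : Set ι))
    (φ : (∀ i, X i) → ℝ) : 𝔼 x, G x * condAvg s φ x = 𝔼 x, G x * φ x := by
  have hG' : ∀ x y, G (s.piecewise x y) = G x := fun x y =>
    hG fun i hi => s.piecewise_eq_of_mem _ _ hi
  rw [← expect_expect_piecewise s fun x => G x * φ x]
  simp only [hG', condAvg, mul_expect]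

lemma expect_mul_condAvg_sq {s : Finset ι} {G : (∀ i, X i) → ℝ}
    (hG : DependsOn G (s : Set ι)) (φ : (∀ i, X i) → ℝ) :
    𝔼 x, G x * condAvg s φ x ^ 2 = 𝔼 x, 𝔼 y, G x * (φ x * φ (s.piecewise x y)) := by
  have hGφ : DependsOn (fun x => G x * condAvg s φ x) (s : Set ι) := fun x y h => by
    simp only [hG h, dependsOn_condAvg s φ h]
  simp only [sq, ← mul_assoc]
  rw [expect_mul_condAvg hGφ]
  simp only [condAvg, mul_expect, expect_mul, mul_assoc, mul_comm (φ (s.piecewise _ _))]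

end CondAvg

/-! ### Weighted Gowers–Cauchy–Schwarz -/

section BoxProd

variable {ι : Type*} [DecidableEq ι] {X : ι → Type*}

/-- The product of `h` over the cube spanned by `p` and `q` in the coordinates `D`. The second
argument of `h` is a parameter, which is not varied over the cube. -/
noncomputable def boxProd (D : Finset ι) (h : (∀ i, X i) → (∀ i, X i) → ℝ)
    (p q : ∀ i, X i) : ℝ :=
  ∏ S ∈ D.powerset, h (S.piecewise q p) q

@[simp]
lemma boxProd_empty (h : (∀ i, X i) → (∀ i, X i) → ℝ) (p q : ∀ i, X i) :
    boxProd ∅ h p q = h p q := by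
  simp [boxProd]

lemma boxProd_insert {D : Finset ι} {j : ι} (hj : j ∉ D)
    (h : (∀ i, X i) → (∀ i, X i) → ℝ) (p q : ∀ i, X i) :
    boxProd (insert j D) h p q =
      boxProd D h p q * boxProd D h (Function.update p j (q j)) q := by
  have hpw : ∀ S : Finset ι,
      (insert j S).piecewise q p = S.piecewise q (Function.update p j (q j)) := fun S => by
    rw [piecewise_insert, update_piecewise, Function.update_eq_self]
  simp only [boxProd, prod_powerset_insert hj, hpw]

lemma abs_boxProd_le (D : Finset ι) {h h' : (∀ i, X i) → (∀ i, X i) → ℝ}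
    (hh : ∀ p q, |h p q| ≤ h' p q) (p q : ∀ i, X i) : |boxProd D h p q| ≤ boxProd D h' p q := by
  simp only [boxProd, abs_prod]
  exact prod_le_prod (fun _ _ => abs_nonneg _) fun _ _ => hh _ _

lemma dependsOn_boxProd_left {h : (∀ i, X i) → (∀ i, X i) → ℝ} {s : Set ι} (D : Finset ι)
    (hs : ∀ q, DependsOn (fun p => h p q) s) (q : ∀ i, X i) :
    DependsOn (fun p => boxProd D h p q) s := by
  refine dependsOn_prod fun S _ p p' hp => hs q fun i hi => ?_
  by_cases hiS : i ∈ S <;> simp [hiS, hp i hi]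

lemma dependsOn_boxProd_right {h : (∀ i, X i) → (∀ i, X i) → ℝ} {D : Finset ι} {s : Set ι}
    (hD : (D : Set ι) ⊆ s) (hs : ∀ p, DependsOn (h p) s) (p : ∀ i, X i) :
    DependsOn (boxProd D h p) s := fun q q' hq => prod_congr rfl fun S hS => by
  have hpw : S.piecewise q p = S.piecewise q' p :=
    S.piecewise_congr (fun i hi => hq i (hD (mem_powerset.1 hS hi))) fun _ _ => rfl
  rw [hpw, hs _ hq]

/-- The integrand after the coordinates in `D` have been doubled by Cauchy–Schwarz: a factor
`k e` has become its majorant `K e` once a coordinate outside `e` has been doubled. -/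
noncomputable def boxStage (H : Finset (Finset ι))
    (k K : Finset ι → (∀ i, X i) → (∀ i, X i) → ℝ) (D : Finset ι) (p q : ∀ i, X i) : ℝ :=
  ∏ e ∈ H, boxProd (D ∩ e) (if D ⊆ e then k e else K e) p q

lemma boxStage_empty (H : Finset (Finset ι))
    (k K : Finset ι → (∀ i, X i) → (∀ i, X i) → ℝ) (p q : ∀ i, X i) :
    boxStage H k K ∅ p q = ∏ e ∈ H, k e p q := by
  simp [boxStage]

lemma boxStage_insert (H : Finset (Finset ι))
    (k K : Finset ι → (∀ i, X i) → (∀ i, X i) → ℝ) {D : Finset ι} {j : ι} (hj : j ∉ D)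
    (p q : ∀ i, X i) :
    boxStage H k K (insert j D) p q =
      (∏ e ∈ H with j ∉ e, boxProd (D ∩ e) (K e) p q) *
        (boxStage {e ∈ H | j ∈ e} k K D p q *
          boxStage {e ∈ H | j ∈ e} k K D (Function.update p j (q j)) q) := by
  simp only [boxStage]
  rw [← prod_filter_mul_prod_filter_not H (j ∈ ·), mul_comm, ← prod_mul_distrib]
  congr 1 <;> refine prod_congr rfl fun e he => ?_
  · have hje := (mem_filter.1 he).2
    rw [insert_inter_of_notMem hje, if_neg fun h => hje (h (mem_insert_self j D))]
  · have hje := (mem_filter.1 he).2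
    have hsub : insert j D ⊆ e ↔ D ⊆ e := by simp [insert_subset_iff, hje]
    simp only [insert_inter_of_mem hje, hsub,
      boxProd_insert fun h => hj (mem_inter.1 h).1]

variable [Fintype ι] [∀ i, Fintype (X i)] [∀ i, Nonempty (X i)]

lemma expect_expect_update (j : ι) (f : (∀ i, X i) → ℝ) :
    𝔼 r : ∀ i, X i, 𝔼 p, f (Function.update p j (r j)) = 𝔼 p, f p := by
  simpa only [piecewise_singleton] using expect_expect_piecewise {j} f

/-- The value `q j`, on which nothing depends, serves as the second copy of `p j`. -/
lemma sq_expect_mul_le_expect_mul_update (j : ι) {A M B : (∀ i, X i) → (∀ i, X i) → ℝ}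
    (hAM : ∀ p q, |A p q| ≤ M p q)
    (hA : ∀ q, DependsOn (fun p => A p q) {j}ᶜ) (hM : ∀ q, DependsOn (fun p => M p q) {j}ᶜ)
    (hM' : ∀ p, DependsOn (M p) {j}ᶜ) (hB : ∀ p, DependsOn (B p) {j}ᶜ) :
    (𝔼 p, 𝔼 q, A p q * B p q) ^ 2 ≤
      (𝔼 p, 𝔼 q, M p q) * 𝔼 p, 𝔼 q, M p q * (B p q * B (Function.update p j (q j)) q) := by
  have update_eq : ∀ {f : (∀ i, X i) → ℝ}, DependsOn f {j}ᶜ → ∀ p c,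
      f (Function.update p j c) = f p := fun hf p c =>
    hf fun i hi => Function.update_of_ne hi _ _
  let C : (∀ i, X i) → (∀ i, X i) → ℝ := fun p q => 𝔼 r : ∀ i, X i, B (Function.update p j (r j)) q
  have hC : ∀ q, DependsOn (fun p => C p q) {j}ᶜ := fun q p p' hp => by
    have : ∀ c, Function.update p j c = Function.update p' j c := fun c => by
      ext i
      by_cases hi : i = j
      · subst hi; simp
      · simpa [hi] using hp i hi
    simp only [C, this]
  have average_B : ∀ G : (∀ i, X i) → (∀ i, X i) → ℝ,
      (∀ q, DependsOn (fun p => G p q) {j}ᶜ) →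
      𝔼 p, 𝔼 q, G p q * B p q = 𝔼 p, 𝔼 q, G p q * C p q := fun G hG => by
    rw [expect_comm, expect_comm (f := fun p q => G p q * C p q)]
    refine expect_congr rfl fun q _ => ?_
    rw [← expect_expect_update j, expect_comm]
    simp only [update_eq (hG q), C, mul_expect]
  have double_B : ∀ p, 𝔼 q, M p q * C p q * B p q =
      𝔼 q, M p q * (B p q * B (Function.update p j (q j)) q) := fun p => by
    rw [← expect_expect_update j fun q => M p q * (B p q * B (Function.update p j (q j)) q),
      expect_comm]
    simp only [update_eq (hM' p), update_eq (hB _), Function.update_self, C, mul_expect,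
      expect_mul, mul_comm (B p _), mul_assoc]
  have hcs := sq_expect_mul_le (univ ×ˢ univ) (A := fun w => A w.1 w.2)
    (M := fun w => M w.1 w.2) (fun w => C w.1 w.2) fun w _ => hAM w.1 w.2
  simp only [expect_product, sq (C _ _), ← mul_assoc] at hcs
  rw [average_B A hA]
  refine hcs.trans_eq ?_
  rw [← average_B (fun p q => M p q * C p q) fun q p p' hp => by simp only [hM q hp, hC q hp]]
  simp only [double_B]

lemma sq_expect_boxStage_le {H : Finset (Finset ι)}
    {k K : Finset ι → (∀ i, X i) → (∀ i, X i) → ℝ} {D : Finset ι} {j : ι} (hj : j ∉ D)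
    (hk : ∀ e ∈ H, ∀ q, DependsOn (fun p => k e p q) (e : Set ι))
    (hK : ∀ e ∈ H, ∀ q, DependsOn (fun p => K e p q) (e : Set ι))
    (hk' : ∀ e ∈ H, ∀ p, DependsOn (k e p) {j}ᶜ) (hK' : ∀ e ∈ H, ∀ p, DependsOn (K e p) {j}ᶜ)
    (hkK : ∀ e ∈ H, j ∉ e → ∀ p q, |k e p q| ≤ K e p q) :
    (𝔼 p, 𝔼 q, boxStage H k K D p q) ^ 2 ≤
      (𝔼 p, 𝔼 q, ∏ e ∈ H with j ∉ e, boxProd (D ∩ e) (K e) p q) *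
        𝔼 p, 𝔼 q, boxStage H k K (insert j D) p q := by
  have hDj : ∀ e, ((D ∩ e : Finset ι) : Set ι) ⊆ {j}ᶜ := fun e i hi hij =>
    hj (hij ▸ (mem_inter.1 hi).1)
  have hcompl : ∀ {e : Finset ι}, j ∉ e → (e : Set ι) ⊆ {j}ᶜ := fun hje i hi hij =>
    hje (hij ▸ hi)
  have split : ∀ p q, boxStage H k K D p q =
      boxStage {e ∈ H | j ∉ e} k K D p q * boxStage {e ∈ H | j ∈ e} k K D p q := fun p q => by
    rw [mul_comm, boxStage, ← prod_filter_mul_prod_filter_not H (j ∈ ·)]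
    rfl
  simp only [boxStage_insert H k K hj, split]
  refine sq_expect_mul_le_expect_mul_update j (fun p q => ?_) (fun q => ?_) (fun q => ?_)
    (fun p => ?_) fun p => ?_
  · rw [boxStage, abs_prod]
    refine prod_le_prod (fun _ _ => abs_nonneg _) fun e he => abs_boxProd_le _ (fun p q => ?_) p q
    have hle := (mem_filter.1 he).elim (hkK e) p q
    split_ifs
    exacts [hle, (abs_of_nonneg ((abs_nonneg _).trans hle)).le]
  · refine dependsOn_prod fun e he => dependsOn_boxProd_left _ (fun q => ?_) q
    obtain ⟨heH, hje⟩ := mem_filter.1 he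
    split_ifs
    exacts [(hk e heH q).mono (hcompl hje), (hK e heH q).mono (hcompl hje)]
  · refine dependsOn_prod fun e he => dependsOn_boxProd_left _ (fun q => ?_) q
    obtain ⟨heH, hje⟩ := mem_filter.1 he
    exact (hK e heH q).mono (hcompl hje)
  · exact dependsOn_prod fun e he =>
      dependsOn_boxProd_right (hDj e) (hK' e (mem_filter.1 he).1) p
  · refine dependsOn_prod fun e he => dependsOn_boxProd_right (hDj e) (fun p => ?_) p
    split_ifs
    exacts [hk' e (mem_filter.1 he).1 p, hK' e (mem_filter.1 he).1 p]

theorem abs_expect_prod_pow_le_abs_expect_boxStage {H : Finset (Finset ι)}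
    {k K : Finset ι → (∀ i, X i) → (∀ i, X i) → ℝ} {D₀ : Finset ι} {C : ℝ} (hC : 0 < C)
    (hk : ∀ e ∈ H, ∀ q, DependsOn (fun p => k e p q) (e : Set ι))
    (hK : ∀ e ∈ H, ∀ q, DependsOn (fun p => K e p q) (e : Set ι))
    (hk' : ∀ e ∈ H, ∀ p, DependsOn (k e p) (D₀ : Set ι)ᶜ)
    (hK' : ∀ e ∈ H, ∀ p, DependsOn (K e p) (D₀ : Set ι)ᶜ)
    (hkK : ∀ e ∈ H, ¬ D₀ ⊆ e → ∀ p q, |k e p q| ≤ K e p q)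
    (hKC : ∀ D ⊆ D₀, ∀ H' ⊆ H, (∀ e ∈ H', ¬ D₀ ⊆ e) →
      𝔼 p, 𝔼 q, ∏ e ∈ H', boxProd (D ∩ e) (K e) p q ≤ C) :
    (|𝔼 p, 𝔼 q, ∏ e ∈ H, k e p q| / C) ^ 2 ^ #D₀ ≤ |𝔼 p, 𝔼 q, boxStage H k K D₀ p q| / C := by
  suffices h : ∀ D ⊆ D₀, (|𝔼 p, 𝔼 q, ∏ e ∈ H, k e p q| / C) ^ 2 ^ #D ≤
      |𝔼 p, 𝔼 q, boxStage H k K D p q| / C from h D₀ Subset.rfl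
  intro D
  induction D using Finset.induction_on with
  | empty => simp [boxStage_empty]
  | insert j D hj ih =>
    intro hD
    obtain ⟨hjD₀, hDD₀⟩ := insert_subset_iff.1 hD
    have hcompl : (D₀ : Set ι)ᶜ ⊆ {j}ᶜ := Set.compl_subset_compl.2 (by simpa using hjD₀)
    have hsub : ∀ e, j ∉ e → ¬ D₀ ⊆ e := fun e hje h => hje (h hjD₀)
    set a := 𝔼 p, 𝔼 q, boxStage H k K D p q
    set b := 𝔼 p, 𝔼 q, boxStage H k K (insert j D) p q
    have hM := hKC D hDD₀ {e ∈ H | j ∉ e} (filter_subset _ _)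
      fun e he => hsub e (mem_filter.1 he).2
    have hM₀ : 0 ≤ 𝔼 p, 𝔼 q, ∏ e ∈ H with j ∉ e, boxProd (D ∩ e) (K e) p q :=
      expect_nonneg fun p _ => expect_nonneg fun q _ => prod_nonneg fun e he =>
        (abs_nonneg _).trans (abs_boxProd_le (D ∩ e)
          (hkK e (mem_filter.1 he).1 (hsub e (mem_filter.1 he).2)) p q)
    have step : a ^ 2 ≤ C * |b| :=
      calc a ^ 2 ≤ _ * b := sq_expect_boxStage_le hj hk hK
            (fun e he p => (hk' e he p).mono hcompl) (fun e he p => (hK' e he p).mono hcompl)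
            fun e he hje => hkK e he (hsub e hje)
        _ ≤ _ * |b| := mul_le_mul_of_nonneg_left (le_abs_self b) hM₀
        _ ≤ C * |b| := mul_le_mul_of_nonneg_right hM (abs_nonneg b)
    calc _ = ((|𝔼 p, 𝔼 q, ∏ e ∈ H, k e p q| / C) ^ 2 ^ #D) ^ 2 := by
          rw [card_insert_of_notMem hj, pow_succ, pow_mul]
      _ ≤ (|a| / C) ^ 2 := by gcongr; exact ih hDD₀
      _ = a ^ 2 / C / C := by rw [div_pow, sq_abs]; field_simp
      _ ≤ C * |b| / C / C := by gcongr
      _ = |b| / C := by field_simp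

end BoxProd

/-! ### The linear forms condition -/

section LinForms

variable {ι : Type*} [DecidableEq ι] {X : ι → Type*}

/-- The integrand obtained from `h` by passing to two copies of the coordinates outside `e₀`. -/
def pairProd (e₀ : Finset ι) (h : (∀ i, X i) → ℝ) (p q : ∀ i, X i) : ℝ :=
  h p * h (e₀.piecewise p q)

lemma dependsOn_pairProd_left (e₀ : Finset ι) {h : (∀ i, X i) → ℝ} {s : Set ι}
    (hs : DependsOn h s) (q : ∀ i, X i) : DependsOn (fun p => pairProd e₀ h p q) s :=
  fun p p' hp => by
    refine congrArg₂ (· * ·) (hs hp) (hs fun i hi => ?_)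
    by_cases hi₀ : i ∈ e₀ <;> simp [hi₀, hp i hi]

lemma dependsOn_pairProd_right (e₀ : Finset ι) (h : (∀ i, X i) → ℝ) (p : ∀ i, X i) :
    DependsOn (pairProd e₀ h p) (e₀ : Set ι)ᶜ := fun q q' hq => by
  rw [pairProd, e₀.piecewise_congr (fun _ _ => rfl) hq, pairProd]

lemma abs_pairProd_le (e₀ : Finset ι) {h h' : (∀ i, X i) → ℝ} (hh : ∀ x, |h x| ≤ h' x)
    (p q : ∀ i, X i) : |pairProd e₀ h p q| ≤ pairProd e₀ h' p q := by
  rw [pairProd, abs_mul]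
  exact mul_le_mul (hh _) (hh _) (abs_nonneg _) ((abs_nonneg _).trans (hh _))

/-- The sets `S ⊆ e` of coordinates taken from the second copy in the factors of
`boxProd (D ∩ e) (pairProd e₀ h)`, when `h` depends on the coordinates in `e`. -/
def doubledFamily (e₀ D e : Finset ι) : Finset (Finset ι) :=
  (D ∩ e).powerset ∪ (D ∩ e).powerset.image (· ∪ e \ e₀)

lemma subset_of_mem_doubledFamily {e₀ D e S : Finset ι} (hS : S ∈ doubledFamily e₀ D e) :
    S ⊆ e := by
  simp only [doubledFamily, mem_union, mem_image, mem_powerset] at hS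
  obtain hS | ⟨T, hT, rfl⟩ := hS
  exacts [hS.trans inter_subset_right, union_subset (hT.trans inter_subset_right) sdiff_subset]

lemma prod_doubledFamily {e₀ D e : Finset ι} (hD : D ⊆ e₀) (he : ¬ e ⊆ e₀)
    {h : (∀ i, X i) → ℝ} (hh : DependsOn h (e : Set ι)) (p q : ∀ i, X i) :
    ∏ S ∈ doubledFamily e₀ D e, h (S.piecewise q p) = boxProd (D ∩ e) (pairProd e₀ h) p q := by
  have sub_e₀ : ∀ S ∈ (D ∩ e).powerset, S ⊆ e₀ := fun S hS =>
    (mem_powerset.1 hS).trans (inter_subset_left.trans hD)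
  have union_inter : ∀ S ∈ (D ∩ e).powerset, (S ∪ e \ e₀) ∩ e₀ = S := fun S hS => by
    rw [union_inter_distrib_right, sdiff_inter_self, union_empty,
      inter_eq_left.2 (sub_e₀ S hS)]
  have disj : Disjoint (D ∩ e).powerset ((D ∩ e).powerset.image (· ∪ e \ e₀)) := by
    refine disjoint_right.2 fun S hS hS' => he ?_
    obtain ⟨T, -, rfl⟩ := mem_image.1 hS
    exact fun i hi => by_contra fun hi₀ =>
      hi₀ (sub_e₀ _ hS' (mem_union_right _ (mem_sdiff.2 ⟨hi, hi₀⟩)))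
  have inj : Set.InjOn (· ∪ e \ e₀) ((D ∩ e).powerset : Set (Finset ι)) := fun S hS T hT hST => by
    rw [← union_inter S hS, ← union_inter T hT]
    exact congrArg (· ∩ e₀) hST
  rw [doubledFamily, prod_union disj, prod_image inj, ← prod_mul_distrib, boxProd]
  refine prod_congr rfl fun S _ => congrArg _ (hh fun i hi => ?_)
  by_cases hi₀ : i ∈ e₀
  · by_cases hiS : i ∈ S <;> simp [hi₀, hiS]
  · simp [hi₀, mem_coe.1 hi]

variable [Fintype ι] [∀ i, Fintype (X i)]

/-- The `H`-linear forms condition within `η` for functions `N e` on the whole product (in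
applications `N e x` depends only on the coordinates in `e`). The exponents are encoded by the
family `Ω e` of those `S ⊆ e` for which the factor evaluated at the point with coordinates in
`S` from the second copy, and the others from the first one, is present. -/
def LinForms (H : Finset (Finset ι)) (N : Finset ι → (∀ i, X i) → ℝ) (η : ℝ) : Prop :=
  ∀ Ω : Finset ι → Finset (Finset ι), (∀ e ∈ H, ∀ S ∈ Ω e, S ⊆ e) →
    |(𝔼 p, 𝔼 q, ∏ e ∈ H, ∏ S ∈ Ω e, N e (S.piecewise q p)) - 1| ≤ η

namespace LinForms

variable {H H' : Finset (Finset ι)} {N : Finset ι → (∀ i, X i) → ℝ} {η η' : ℝ}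

lemma mono (hN : LinForms H N η) (hη : η ≤ η') : LinForms H N η' :=
  fun Ω hΩ => (hN Ω hΩ).trans hη

lemma subset (hN : LinForms H N η) (hH : H' ⊆ H) : LinForms H' N η := fun Ω hΩ => by
  have hprod : ∀ p q, ∏ e ∈ H', ∏ S ∈ Ω e, N e (S.piecewise q p) =
      ∏ e ∈ H, ∏ S ∈ if e ∈ H' then Ω e else ∅, N e (S.piecewise q p) := fun p q => by
    rw [← inter_eq_right.2 hH, ← filter_mem_eq_inter, prod_filter]
    exact prod_congr rfl fun e he => by by_cases h : e ∈ H' <;> simp [h, he]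
  simp only [hprod]
  refine hN _ fun e _ S hS => ?_
  split_ifs at hS with he
  exacts [hΩ e he S hS, absurd hS (notMem_empty S)]

lemma update_one (hN : LinForms H N η) (e₁ : Finset ι) :
    LinForms H (Function.update N e₁ 1) η := fun Ω hΩ => by
  have hprod : ∀ e p q, ∏ S ∈ Ω e, Function.update N e₁ 1 e (S.piecewise q p) =
      ∏ S ∈ Function.update Ω e₁ ∅ e, N e (S.piecewise q p) := fun e p q => by
    obtain rfl | he := eq_or_ne e e₁ <;> simp [*]
  simp only [hprod]
  refine hN _ fun e he S hS => ?_
  obtain rfl | he₁ := eq_or_ne e e₁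
  · simp at hS
  · exact hΩ e he S (by simpa [he₁] using hS)

lemma abs_expect_prod_mul_prod_boxProd_sub_one_le {e₀ D : Finset ι}
    (hN : LinForms (insert e₀ H) N η) (hNd : ∀ e ∈ H, DependsOn (N e) (e : Set ι))
    (hH : ∀ e ∈ H, ¬ e ⊆ e₀) (hD : D ⊆ e₀) {𝒮 : Finset (Finset ι)} (h𝒮 : ∀ S ∈ 𝒮, S ⊆ e₀) :
    |(𝔼 p, 𝔼 q, (∏ S ∈ 𝒮, N e₀ (S.piecewise q p)) *
      ∏ e ∈ H, boxProd (D ∩ e) (pairProd e₀ (N e)) p q) - 1| ≤ η := by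
  have he₀ : e₀ ∉ H := fun h => hH e₀ h Subset.rfl
  have hprod : ∀ p q, (∏ S ∈ 𝒮, N e₀ (S.piecewise q p)) *
      ∏ e ∈ H, boxProd (D ∩ e) (pairProd e₀ (N e)) p q =
      ∏ e ∈ insert e₀ H, ∏ S ∈ Function.update (doubledFamily e₀ D) e₀ 𝒮 e,
        N e (S.piecewise q p) := fun p q => by
    rw [prod_insert he₀, Function.update_self]
    refine congrArg _ (prod_congr rfl fun e he => ?_)
    rw [Function.update_of_ne (ne_of_mem_of_not_mem he he₀),
      prod_doubledFamily hD (hH e he) (hNd e he)]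
  simp only [hprod]
  refine hN _ fun e _ S hS => ?_
  obtain rfl | hne := eq_or_ne e e₀
  · exact h𝒮 S (by simpa using hS)
  · exact subset_of_mem_doubledFamily (by simpa [hne] using hS)

lemma abs_expect_prod_sub_one_le [∀ i, Nonempty (X i)] (hN : LinForms H N η) :
    |(𝔼 x, ∏ e ∈ H, N e x) - 1| ≤ η := by
  simpa using hN (fun _ => {∅}) fun _ _ _ hS => (mem_singleton.1 hS) ▸ empty_subset _

end LinForms

end LinForms

/-! ### The strong linear forms condition -/

lemma abs_expect_prod_sub_one_mul_le {α κ : Type*} (s : Finset α) {P : Finset κ}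
    (hP : P.Nonempty) {a : κ → α → ℝ} {G : α → ℝ} {η : ℝ}
    (h : ∀ t ⊆ P, |(𝔼 x ∈ s, (∏ i ∈ t, a i x) * G x) - 1| ≤ η) :
    |𝔼 x ∈ s, (∏ i ∈ P, (a i x - 1)) * G x| ≤ 2 ^ #P * η := by
  classical
  have alternating : ∑ t ∈ P.powerset, (-1 : ℝ) ^ #t = 0 := mod_cast
    sum_powerset_neg_one_pow_card_of_nonempty hP
  have expand : 𝔼 x ∈ s, (∏ i ∈ P, (a i x - 1)) * G x =
      ∑ t ∈ P.powerset, (-1) ^ #t * ((𝔼 x ∈ s, (∏ i ∈ P \ t, a i x) * G x) - 1) := by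
    simp only [mul_sub_one, sum_sub_distrib, alternating, sub_zero, mul_expect]
    rw [← expect_sum_comm]
    simp only [prod_sub, prod_const_one, mul_one, sum_mul, mul_assoc]
  rw [expand]
  calc _ ≤ ∑ t ∈ P.powerset, |(𝔼 x ∈ s, (∏ i ∈ P \ t, a i x) * G x) - 1| := by
        refine (abs_sum_le_sum_abs _ _).trans_eq ?_
        simp only [abs_mul, abs_neg_one_pow, one_mul]
    _ ≤ ∑ _t ∈ P.powerset, η := sum_le_sum fun t _ => h _ sdiff_subset
    _ = 2 ^ #P * η := by simp

section Majorized

variable {ι : Type*} {X : ι → Type*}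

/-- For each `e ∈ H`, both `f e` and `N e` depend only on the coordinates in `e`, and `N e`
dominates `|f e|`. -/
structure IsMajorized (H : Finset (Finset ι)) (f N : Finset ι → (∀ i, X i) → ℝ) : Prop where
  dependsOn : ∀ e ∈ H, DependsOn (f e) (e : Set ι)
  majorant_dependsOn : ∀ e ∈ H, DependsOn (N e) (e : Set ι)
  abs_le : ∀ e ∈ H, ∀ x, |f e x| ≤ N e x

namespace IsMajorized

variable {H H' : Finset (Finset ι)} {f N : Finset ι → (∀ i, X i) → ℝ}

lemma subset (h : IsMajorized H f N) (hH : H' ⊆ H) : IsMajorized H' f N :=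
  ⟨fun e he => h.dependsOn e (hH he), fun e he => h.majorant_dependsOn e (hH he),
    fun e he => h.abs_le e (hH he)⟩

lemma majorant_nonneg (h : IsMajorized H f N) {e : Finset ι} (he : e ∈ H) (x : ∀ i, X i) :
    0 ≤ N e x := (abs_nonneg _).trans (h.abs_le e he x)

lemma abs_prod_le (h : IsMajorized H f N) (x : ∀ i, X i) :
    |∏ e ∈ H, f e x| ≤ ∏ e ∈ H, N e x := by
  rw [abs_prod]
  exact prod_le_prod (fun _ _ => abs_nonneg _) fun e he => h.abs_le e he x

lemma update_one [DecidableEq ι] (h : IsMajorized H f N) {e₁ : Finset ι}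
    {t : (∀ i, X i) → ℝ} (ht : DependsOn t (e₁ : Set ι)) (ht₁ : ∀ x, |t x| ≤ 1) :
    IsMajorized H (Function.update f e₁ t) (Function.update N e₁ 1) := by
  refine ⟨fun e he => ?_, fun e he => ?_, fun e he x => ?_⟩ <;>
    obtain rfl | hne := eq_or_ne e e₁
  · rwa [Function.update_self]
  · rw [Function.update_of_ne hne]; exact h.dependsOn e he
  · rw [Function.update_self]; exact fun _ _ _ => rfl
  · rw [Function.update_of_ne hne]; exact h.majorant_dependsOn e he
  · rw [Function.update_self, Function.update_self]; exact ht₁ x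
  · rw [Function.update_of_ne hne, Function.update_of_ne hne]; exact h.abs_le e he x

end IsMajorized

end Majorized

section StrongLinearForms

variable {ι : Type*} [DecidableEq ι] [Fintype ι] {X : ι → Type*} [∀ i, Fintype (X i)]
  {H : Finset (Finset ι)} {f N : Finset ι → (∀ i, X i) → ℝ} {e₀ : Finset ι} {η : ℝ}

/-- Once all coordinates of `e₀` are doubled, every other factor is a majorant, while `N e₀ - 1`
occurs at all vertices of a cube; expanding these, the main terms cancel. -/
lemma abs_expect_prod_powerset_sub_one_mul_le (hN : LinForms (insert e₀ H) N η)
    (hNd : ∀ e ∈ H, DependsOn (N e) (e : Set ι)) (hH : ∀ e ∈ H, ¬ e ⊆ e₀) :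
    |𝔼 p, 𝔼 q, (∏ S ∈ e₀.powerset, (N e₀ (S.piecewise q p) - 1)) *
      ∏ e ∈ H, boxProd (e₀ ∩ e) (pairProd e₀ (N e)) p q| ≤ 2 ^ 2 ^ #e₀ * η := by
  have hexpand := abs_expect_prod_sub_one_mul_le (univ ×ˢ univ) (powerset_nonempty e₀)
    (a := fun S w => N e₀ (S.piecewise w.2 w.1))
    (G := fun w => ∏ e ∈ H, boxProd (e₀ ∩ e) (pairProd e₀ (N e)) w.1 w.2) (η := η)
  simp only [expect_product, card_powerset] at hexpand
  exact hexpand fun t ht => hN.abs_expect_prod_mul_prod_boxProd_sub_one_le hNd hH Subset.rfl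
    fun S hS => mem_powerset.1 (ht hS)

variable [∀ i, Nonempty (X i)]

lemma abs_expect_mul_condAvg_sq_pow_le {C : ℝ} (hC : 0 < C) {G : (∀ i, X i) → ℝ}
    (hG : DependsOn G (e₀ : Set ι)) (hf : IsMajorized H f N) (hH : ∀ e ∈ H, ¬ e₀ ⊆ e)
    (hNC : ∀ D ⊆ e₀, ∀ H' ⊆ H,
      𝔼 p, 𝔼 q, ∏ e ∈ H', boxProd (D ∩ e) (pairProd e₀ (N e)) p q ≤ C) :
    (|𝔼 x, G x * condAvg e₀ (fun x => ∏ e ∈ H, f e x) x ^ 2| / C) ^ 2 ^ #e₀ ≤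
      |𝔼 p, 𝔼 q, (∏ S ∈ e₀.powerset, G (S.piecewise q p)) *
        ∏ e ∈ H, boxProd (e₀ ∩ e) (pairProd e₀ (N e)) p q| / C := by
  have he₀ : e₀ ∉ H := fun h => hH e₀ h Subset.rfl
  let adjoin (F : Finset ι → (∀ i, X i) → ℝ) : Finset ι → (∀ i, X i) → (∀ i, X i) → ℝ :=
    Function.update (fun e => pairProd e₀ (F e)) e₀ fun p _ => G p
  have adjoin_self : ∀ F, adjoin F e₀ = fun p _ => G p := fun F => Function.update_self _ _ _
  have adjoin_of_mem : ∀ F, ∀ e ∈ H, adjoin F e = pairProd e₀ (F e) := fun F e he =>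
    Function.update_of_ne (ne_of_mem_of_not_mem he he₀) _ _
  have depends_left : ∀ F, (∀ e ∈ H, DependsOn (F e) (e : Set ι)) →
      ∀ e ∈ insert e₀ H, ∀ q, DependsOn (fun p => adjoin F e p q) (e : Set ι) := fun F hF =>
    (forall_mem_insert _ _ _).2 ⟨adjoin_self F ▸ fun _ => hG, fun e he =>
      adjoin_of_mem F e he ▸ dependsOn_pairProd_left e₀ (hF e he)⟩
  have depends_right : ∀ F, ∀ e ∈ insert e₀ H, ∀ p, DependsOn (adjoin F e p) (e₀ : Set ι)ᶜ :=
    fun F => (forall_mem_insert _ _ _).2 ⟨adjoin_self F ▸ fun _ _ _ _ => rfl, fun e he =>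
      adjoin_of_mem F e he ▸ dependsOn_pairProd_right e₀ (F e)⟩
  have hGCS := abs_expect_prod_pow_le_abs_expect_boxStage (H := insert e₀ H) (k := adjoin f)
    (K := adjoin N) (D₀ := e₀) hC (depends_left f hf.dependsOn)
    (depends_left N hf.majorant_dependsOn) (depends_right f) (depends_right N)
    ((forall_mem_insert _ _ _).2 ⟨fun h => absurd Subset.rfl h, fun e he _ => by
      rw [adjoin_of_mem f e he, adjoin_of_mem N e he]
      exact abs_pairProd_le e₀ (hf.abs_le e he)⟩)
    fun D hD H' hH' hH'e₀ => by
      have hsub : H' ⊆ H := fun e he => mem_of_mem_insert_of_ne (hH' he)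
        fun h => hH'e₀ e he h.symm.subset
      refine (hNC D hD H' hsub).trans_eq' (expect_congr rfl fun p _ => expect_congr rfl fun q _ =>
        prod_congr rfl fun e he => by rw [adjoin_of_mem N e (hsub he)])
  convert hGCS using 3
  · rw [expect_mul_condAvg_sq hG]
    congr! 5 with p _ q
    rw [prod_insert he₀, adjoin_self, ← prod_mul_distrib]
    exact congrArg _ (prod_congr rfl fun e he => by rw [adjoin_of_mem f e he, pairProd])
  · congr! 3 with p _ q
    rw [boxStage, prod_insert he₀, if_pos Subset.rfl, adjoin_self, inter_self]
    exact congrArg _ (prod_congr rfl fun e he => by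
      rw [if_neg (hH e he), adjoin_of_mem N e he])

theorem abs_expect_sub_one_mul_condAvg_sq_pow_le (hN : LinForms (insert e₀ H) N η) (hη : η ≤ 1)
    (hNe₀ : DependsOn (N e₀) (e₀ : Set ι)) (hf : IsMajorized H f N)
    (hH : ∀ e ∈ H, ¬ e ⊆ e₀) (hH' : ∀ e ∈ H, ¬ e₀ ⊆ e) :
    (|𝔼 x, (N e₀ x - 1) * condAvg e₀ (fun x => ∏ e ∈ H, f e x) x ^ 2| / 4) ^ 2 ^ #e₀ ≤ η := by
  have hNC : ∀ D ⊆ e₀, ∀ H' ⊆ H,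
      𝔼 p, 𝔼 q, ∏ e ∈ H', boxProd (D ∩ e) (pairProd e₀ (N e)) p q ≤ 2 := fun D hD H' hH'H => by
    have hone := (hN.subset (insert_subset_insert e₀ hH'H))
      |>.abs_expect_prod_mul_prod_boxProd_sub_one_le
        (fun e he => hf.majorant_dependsOn e (hH'H he)) (fun e he => hH e (hH'H he)) hD
        (𝒮 := ∅) (by simp)
    simp only [prod_empty, one_mul] at hone
    linarith [(abs_le.1 hone).2]
  have hGCS := abs_expect_mul_condAvg_sq_pow_le two_pos (G := fun x => N e₀ x - 1)
    (fun x y h => by simp only [hNe₀ h]) hf hH' hNC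
  have hfinal := abs_expect_prod_powerset_sub_one_mul_le hN hf.majorant_dependsOn hH
  set a := 𝔼 x, (N e₀ x - 1) * condAvg e₀ (fun x => ∏ e ∈ H, f e x) x ^ 2
  calc (|a| / 4) ^ 2 ^ #e₀ = (|a| / 2) ^ 2 ^ #e₀ / 2 ^ 2 ^ #e₀ := by
        rw [← div_pow, div_div]; norm_num
    _ ≤ 2 ^ 2 ^ #e₀ * η / 2 ^ 2 ^ #e₀ := by
        gcongr
        exact hGCS.trans ((half_le_self (abs_nonneg _)).trans hfinal)
    _ = η := by field_simp

end StrongLinearForms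

/-! ### Densification -/

lemma sq_le_clamp_mul_self_add {a b : ℝ} (h : |a| ≤ b) :
    a ^ 2 ≤ max (-1) (min 1 a) * a + ((b - 1) ^ 2 + |b - 1|) := by
  obtain ha | ha := le_total |a| 1
  · obtain ⟨ha₁, ha₂⟩ := abs_le.1 ha
    rw [min_eq_right ha₂, max_eq_right ha₁]
    nlinarith [sq_nonneg (b - 1), abs_nonneg (b - 1)]
  · have clamp_mul : max (-1) (min 1 a) * a = |a| := by
      obtain ha₀ | ha₀ := le_total 0 a
      · rw [abs_of_nonneg ha₀] at ha ⊢
        rw [min_eq_left ha, max_eq_right (by norm_num), one_mul]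
      · rw [abs_of_nonpos ha₀] at ha ⊢
        rw [min_eq_right (by linarith), max_eq_left (by linarith), neg_one_mul]
    rw [clamp_mul, ← sq_abs a]
    nlinarith [le_abs_self (b - 1)]

lemma abs_le_rpow_of_pow_le {c η : ℝ} {m n : ℕ} (hη : η ≤ 1) (hmn : m ≤ n)
    (h : (|c| / 4) ^ 2 ^ m ≤ η) : |c| ≤ 4 * η ^ ((2 ^ n : ℝ)⁻¹) := by
  have hη₀ : 0 ≤ η := h.trans' (by positivity)
  have hm : |c| / 4 ≤ η ^ ((2 ^ m : ℝ)⁻¹) := by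
    have hroot := Real.rpow_le_rpow (z := ((2 ^ m : ℕ) : ℝ)⁻¹) (by positivity) h (by positivity)
    rwa [Real.pow_rpow_inv_natCast (by positivity) (by positivity), Nat.cast_pow,
      Nat.cast_ofNat] at hroot
  have hmono : η ^ ((2 ^ m : ℝ)⁻¹) ≤ η ^ ((2 ^ n : ℝ)⁻¹) :=
    Real.rpow_le_rpow_of_exponent_ge' hη₀ hη (by positivity) (by gcongr; norm_num)
  linarith

section Densification

variable {ι : Type*} [DecidableEq ι] [Fintype ι] {X : ι → Type*} [∀ i, Fintype (X i)]
  [∀ i, Nonempty (X i)] {H : Finset (Finset ι)} {f N : Finset ι → (∀ i, X i) → ℝ}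
  {e₀ : Finset ι} {η : ℝ}

lemma expect_condAvg_prod_sub_one_sq_le (hN : LinForms (insert e₀ H) N η)
    (hNd : ∀ e ∈ H, DependsOn (N e) (e : Set ι)) (hH : ∀ e ∈ H, ¬ e ⊆ e₀) :
    𝔼 x, (condAvg e₀ (fun x => ∏ e ∈ H, N e x) x - 1) ^ 2 ≤ 3 * η := by
  have first : |(𝔼 x, condAvg e₀ (fun x => ∏ e ∈ H, N e x) x) - 1| ≤ η := by
    simp only [condAvg, expect_expect_piecewise e₀ fun x => ∏ e ∈ H, N e x]
    exact (hN.subset (subset_insert e₀ H)).abs_expect_prod_sub_one_le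
  have second : |(𝔼 x, condAvg e₀ (fun x => ∏ e ∈ H, N e x) x ^ 2) - 1| ≤ η := by
    have hbox := hN.abs_expect_prod_mul_prod_boxProd_sub_one_le hNd hH (empty_subset e₀)
      (𝒮 := ∅) (by simp)
    have hsq := expect_mul_condAvg_sq (s := e₀) (G := fun _ => 1) (fun _ _ _ => rfl)
      fun x => ∏ e ∈ H, N e x
    simp only [one_mul, ← prod_mul_distrib] at hsq
    rw [hsq]
    simpa only [prod_empty, one_mul, empty_inter, boxProd_empty, pairProd] using hbox
  calc 𝔼 x, (condAvg e₀ (fun x => ∏ e ∈ H, N e x) x - 1) ^ 2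
      = (𝔼 x, condAvg e₀ (fun x => ∏ e ∈ H, N e x) x ^ 2) -
          2 * (𝔼 x, condAvg e₀ (fun x => ∏ e ∈ H, N e x) x) + 1 := by
        simp only [sub_sq, mul_one, one_pow, expect_add_distrib, expect_sub_distrib, mul_expect,
          Fintype.expect_const]
    _ ≤ 3 * η := by linarith [(abs_le.1 first).1, (abs_le.1 second).2]

/-- The loss incurred when one sparse factor is replaced by a bounded one, for products over `n`
coordinates and majorants satisfying the linear forms condition within `η`. -/
noncomputable def densifyError (n : ℕ) (η : ℝ) : ℝ :=
  4 * η ^ ((2 ^ n : ℝ)⁻¹) + (3 * η + √(3 * η))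

lemma tendsto_densifyError (n : ℕ) : Tendsto (densifyError n) (𝓝 0) (𝓝 0) := by
  have hcont : Continuous (densifyError n) := by
    have : (0 : ℝ) ≤ (2 ^ n : ℝ)⁻¹ := by positivity
    unfold densifyError
    fun_prop (disch := assumption)
  have hzero : densifyError n 0 = 0 := by simp [densifyError, Real.zero_rpow]
  simpa [hzero] using hcont.tendsto 0

lemma expect_condAvg_prod_sq_le (hN : LinForms (insert e₀ H) N η) (hf : IsMajorized H f N)
    (hH : ∀ e ∈ H, ¬ e ⊆ e₀) :
    𝔼 x, condAvg e₀ (fun x => ∏ e ∈ H, f e x) x ^ 2 ≤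
      (𝔼 x, max (-1) (min 1 (condAvg e₀ (fun x => ∏ e ∈ H, f e x) x)) * ∏ e ∈ H, f e x) +
        (3 * η + √(3 * η)) := by
  set a := condAvg e₀ fun x => ∏ e ∈ H, f e x
  set b := condAvg e₀ fun x => ∏ e ∈ H, N e x
  have l2 : 𝔼 x, (b x - 1) ^ 2 ≤ 3 * η :=
    expect_condAvg_prod_sub_one_sq_le hN hf.majorant_dependsOn hH
  have l1 : 𝔼 x, |b x - 1| ≤ √(3 * η) := by
    have hcs := sq_expect_mul_le univ (A := fun _ => 1) (M := fun _ => 1) (fun x => |b x - 1|)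
      fun _ _ => abs_one.le
    simp only [one_mul, sq_abs, Fintype.expect_const] at hcs
    exact (le_abs_self _).trans (Real.abs_le_sqrt (hcs.trans l2))
  have hclamp : DependsOn (fun x => max (-1) (min 1 (a x))) (e₀ : Set ι) := fun x y h => by
    simp only [a, dependsOn_condAvg e₀ _ h]
  calc 𝔼 x, a x ^ 2
      ≤ 𝔼 x, (max (-1) (min 1 (a x)) * a x + ((b x - 1) ^ 2 + |b x - 1|)) :=
        expect_le_expect fun x _ => sq_le_clamp_mul_self_add (abs_condAvg_le e₀ hf.abs_prod_le x)
    _ ≤ _ := by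
        rw [expect_add_distrib, expect_add_distrib, expect_mul_condAvg hclamp]
        gcongr

/-- The densification step: Cauchy–Schwarz removes the factor `f e₀`, at the cost of squaring
the conditional expectation of the others given the coordinates in `e₀`. One copy of it may be
truncated to `[-1, 1]` because, by the linear forms condition, it is dominated by a function
which is close to `1` in `L²`. -/
theorem exists_sq_expect_prod_le (hN : LinForms (insert e₀ H) N η) (hη : η ≤ 1)
    (hf : IsMajorized (insert e₀ H) f N) (hH : ∀ e ∈ H, ¬ e ⊆ e₀) (hH' : ∀ e ∈ H, ¬ e₀ ⊆ e) :
    ∃ t : (∀ i, X i) → ℝ, DependsOn t (e₀ : Set ι) ∧ (∀ x, |t x| ≤ 1) ∧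
      (𝔼 x, ∏ e ∈ insert e₀ H, f e x) ^ 2 ≤
        2 * ((𝔼 x, t x * ∏ e ∈ H, f e x) + densifyError (Fintype.card ι) η) := by
  have he₀ : e₀ ∈ insert e₀ H := mem_insert_self e₀ H
  have he₀H : e₀ ∉ H := fun h => hH e₀ h Subset.rfl
  have hfH := hf.subset (subset_insert e₀ H)
  set a := condAvg e₀ fun x => ∏ e ∈ H, f e x with ha
  have majorant_le : 𝔼 x, N e₀ x ≤ 2 := by
    have := (hN.subset (singleton_subset_iff.2 he₀)).abs_expect_prod_sub_one_le
    simp only [prod_singleton] at this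
    linarith [(abs_le.1 this).2]
  have strong : 𝔼 x, (N e₀ x - 1) * a x ^ 2 ≤ 4 * η ^ ((2 ^ Fintype.card ι : ℝ)⁻¹) :=
    (le_abs_self _).trans (abs_le_rpow_of_pow_le hη e₀.card_le_univ
      (abs_expect_sub_one_mul_condAvg_sq_pow_le hN hη (hf.majorant_dependsOn e₀ he₀) hfH hH hH'))
  have truncate := expect_condAvg_prod_sq_le hN hfH hH
  rw [← ha] at truncate
  refine ⟨fun x => max (-1) (min 1 (a x)), fun x y h => ?_, fun x => ?_, ?_⟩
  · simp only [a, dependsOn_condAvg e₀ _ h]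
  · exact abs_le.2 ⟨le_max_left _ _, max_le (by norm_num) (min_le_left _ _)⟩
  calc (𝔼 x, ∏ e ∈ insert e₀ H, f e x) ^ 2 = (𝔼 x, f e₀ x * a x) ^ 2 := by
        simp only [prod_insert he₀H, a, expect_mul_condAvg (hf.dependsOn e₀ he₀)]
    _ ≤ (𝔼 x, N e₀ x) * 𝔼 x, N e₀ x * a x ^ 2 :=
        sq_expect_mul_le univ a fun x _ => hf.abs_le e₀ he₀ x
    _ ≤ 2 * 𝔼 x, N e₀ x * a x ^ 2 :=
        mul_le_mul_of_nonneg_right majorant_le (expect_nonneg fun x _ =>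
          mul_nonneg (hf.majorant_nonneg he₀ x) (sq_nonneg _))
    _ = 2 * ((𝔼 x, (N e₀ x - 1) * a x ^ 2) + 𝔼 x, a x ^ 2) := by
        simp only [← expect_add_distrib, sub_one_mul, sub_add_cancel]
    _ ≤ _ := by unfold densifyError; linarith

end Densification

/-! ### Discrepancy -/

section SmallDisc

variable {ι : Type*} [DecidableEq ι] [Fintype ι] {X : ι → Type*} [∀ i, Fintype (X i)]

/-- `F` has correlation at most `ε` with every product of `[-1, 1]`-valued functions of the
faces of `e`. -/
def SmallDisc (e : Finset ι) (F : (∀ i, X i) → ℝ) (ε : ℝ) : Prop :=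
  ∀ b : ι → (∀ i, X i) → ℝ, (∀ j ∈ e, DependsOn (b j) (e.erase j : Set ι)) →
    (∀ j ∈ e, ∀ x, |b j x| ≤ 1) → |𝔼 x, F x * ∏ j ∈ e, b j x| ≤ ε

namespace SmallDisc

variable {e : Finset ι} {F : (∀ i, X i) → ℝ} {ε ε' : ℝ}

lemma mono (hF : SmallDisc e F ε) (hε : ε ≤ ε') : SmallDisc e F ε' :=
  fun b hb hb₁ => (hF b hb hb₁).trans hε

lemma div (hF : SmallDisc e F ε) {c : ℝ} (hc : 0 ≤ c) :
    SmallDisc e (fun x => F x / c) (ε / c) := fun b hb hb₁ => by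
  simp only [div_mul_eq_mul_div, ← expect_div, abs_div, abs_of_nonneg hc]
  gcongr
  exact hF b hb hb₁

end SmallDisc

variable [∀ i, Nonempty (X i)]

lemma abs_expect_mul_le_of_forall_zero_one {s : Finset ι} {F : (∀ i, X i) → ℝ} {ε : ℝ}
    (h : ∀ c : (∀ i, X i) → ℝ, DependsOn c (s : Set ι) → (∀ x, c x = 0 ∨ c x = 1) →
      |𝔼 x, c x * F x| ≤ ε)
    {b : (∀ i, X i) → ℝ} (hb : DependsOn b (s : Set ι)) (hb₁ : ∀ x, |b x| ≤ 1) :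
    |𝔼 x, b x * F x| ≤ 2 * ε := by
  have indicator_le : ∀ t : Set ℝ,
      |𝔼 x, t.indicator 1 (condAvg s F x) * condAvg s F x| ≤ ε := fun t => by
    have ht : DependsOn (fun x => t.indicator (1 : ℝ → ℝ) (condAvg s F x)) (s : Set ι) :=
      fun x y hxy => by simp only [dependsOn_condAvg s F hxy]
    rw [expect_mul_condAvg ht]
    exact h _ ht fun x => t.indicator_eq_zero_or_self 1 _
  have sign_split : ∀ x, |b x * condAvg s F x| ≤
      (Set.Ici 0).indicator 1 (condAvg s F x) * condAvg s F x -
        (Set.Iio 0).indicator 1 (condAvg s F x) * condAvg s F x := fun x => by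
    rw [abs_mul]
    refine (mul_le_of_le_one_left (abs_nonneg _) (hb₁ x)).trans_eq ?_
    obtain hx | hx := le_or_gt 0 (condAvg s F x)
    · simp [hx, abs_of_nonneg hx, not_lt.2 hx]
    · simp [hx, abs_of_neg hx, not_le.2 hx]
  rw [← expect_mul_condAvg hb]
  refine (abs_expect_le _ _).trans ((expect_le_expect fun x _ => sign_split x).trans ?_)
  rw [expect_sub_distrib]
  linarith [(abs_le.1 (indicator_le (Set.Ici 0))).2, (abs_le.1 (indicator_le (Set.Iio 0))).1]

lemma smallDisc_of_forall_zero_one {e : Finset ι} {F : (∀ i, X i) → ℝ} {ε : ℝ}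
    (h : ∀ b : ι → (∀ i, X i) → ℝ, (∀ j ∈ e, DependsOn (b j) (e.erase j : Set ι)) →
      (∀ j ∈ e, ∀ x, b j x = 0 ∨ b j x = 1) → |𝔼 x, F x * ∏ j ∈ e, b j x| ≤ ε) :
    SmallDisc e F (2 ^ #e * ε) := by
  suffices h' : ∀ D ⊆ e, ∀ b : ι → (∀ i, X i) → ℝ,
      (∀ j ∈ e, DependsOn (b j) (e.erase j : Set ι)) →
      (∀ j ∈ e, j ∉ D → ∀ x, b j x = 0 ∨ b j x = 1) → (∀ j ∈ D, ∀ x, |b j x| ≤ 1) →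
      |𝔼 x, F x * ∏ j ∈ e, b j x| ≤ 2 ^ #D * ε from fun b hb hb₁ =>
    h' e Subset.rfl b hb (fun _ hj hj' => absurd hj hj') hb₁
  intro D
  induction D using Finset.induction_on with
  | empty => simpa using fun b hb hb₀ => h b hb hb₀
  | insert j D hjD ih =>
    intro hD b hb hb₀ hb₁
    obtain ⟨hj, hDe⟩ := insert_subset_iff.1 hD
    have isolate : ∀ c : (∀ i, X i) → ℝ, 𝔼 x, c x * (F x * ∏ i ∈ e.erase j, b i x) =
        𝔼 x, F x * ∏ i ∈ e, Function.update b j c i x := fun c => by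
      refine expect_congr rfl fun x _ => ?_
      rw [← mul_prod_erase e _ hj, Function.update_self, mul_left_comm]
      congr 2
      exact prod_congr rfl fun i hi => by rw [Function.update_of_ne (ne_of_mem_erase hi)]
    have hstep := abs_expect_mul_le_of_forall_zero_one (s := e.erase j)
      (F := fun x => F x * ∏ i ∈ e.erase j, b i x) (ε := 2 ^ #D * ε)
      (fun c hc hc₀ => by
        rw [isolate]
        refine ih hDe _ (fun i hi => ?_) (fun i hi hiD => ?_) fun i hi => ?_
        · obtain rfl | hij := eq_or_ne i j
          · rwa [Function.update_self]
          · rw [Function.update_of_ne hij]; exact hb i hi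
        · obtain rfl | hij := eq_or_ne i j
          · rwa [Function.update_self]
          · rw [Function.update_of_ne hij]; exact hb₀ i hi (by simp [hij, hiD])
        · rw [Function.update_of_ne (ne_of_mem_of_not_mem hi hjD)]
          exact hb₁ i (mem_insert_of_mem hi))
      (hb j hj) (hb₁ j (mem_insert_self j D))
    rwa [isolate, Function.update_eq_self, ← mul_assoc, ← pow_succ',
      ← card_insert_of_notMem hjD] at hstep

end SmallDisc

section EdgeDiscrepancy

variable {ι : Type} {X : ι → Type}

lemma dependsOn_comp_restr (e : Finset ι) (u : ((i : ↥e) → X i) → ℝ) :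
    DependsOn (fun x => u (restr e x)) (e : Set ι) := fun x y h => by
  have hxy : restr e x = restr e y := funext fun i => h i i.2
  simp only [hxy]

variable [DecidableEq ι] [Fintype ι] [∀ i, Fintype (X i)] [∀ i, Nonempty (X i)]

lemma expect_comp_restr (e : Finset ι) (f : ((i : ↥e) → X i) → ℝ) :
    𝔼 x, f (restr e x) = 𝔼 z, f z := by
  rw [Fintype.expect_equiv (Equiv.piEquivPiSubtypeProd (· ∈ e) X) (fun x => f (restr e x))
    (fun w => f w.1) fun _ => rfl, ← univ_product_univ, expect_product]
  simp only [Fintype.expect_const]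

lemma EdgeDiscrepancy.smallDisc {e : Finset ι} {g g' : ((i : ↥e) → X i) → ℝ} {ε : ℝ}
    (h : EdgeDiscrepancy e g g' ε) :
    SmallDisc e (fun x => g (restr e x) - g' (restr e x)) (2 ^ #e * ε) := by
  refine smallDisc_of_forall_zero_one fun b hb hb₀ => ?_
  let B : (j : ι) → Set ((i : ↥(e.erase j)) → X i) := fun j =>
    {z | ∃ x, restr (e.erase j) x = z ∧ b j x = 1}
  have prod_eq_faceInd : ∀ x, ∏ j ∈ e, b j x = faceInd e B (restr e x) := fun x => by
    refine prod_congr rfl fun j hj => ?_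
    obtain hx | hx := hb₀ j hj x
    · rw [Set.indicator_of_notMem, hx]
      rintro ⟨y, hy, hy₁⟩
      refine zero_ne_one (hx.symm.trans ((hb j hj fun i hi => ?_).trans hy₁))
      exact (congrFun hy ⟨i, hi⟩).symm
    · exact hx.trans (Set.indicator_of_mem (s := B j) ⟨x, rfl, hx⟩ fun _ => 1).symm
  simp only [prod_eq_faceInd]
  rw [expect_comp_restr e fun z => (g z - g' z) * faceInd e B z, ← avg_eq_expect]
  exact h B

end EdgeDiscrepancy

/-! ### Counting -/

section Counting

variable {ι : Type*} [DecidableEq ι] [Fintype ι]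

section

variable {X : ι → Type*} [∀ i, Fintype (X i)] [∀ i, Nonempty (X i)] {H : Finset (Finset ι)}
  {f N : Finset ι → (∀ i, X i) → ℝ}

/-- With the coordinates outside `e₁` frozen, every other factor is a function of a face
of `e₁`. -/
lemma abs_expect_prod_le_of_smallDisc {e₁ : Finset ι} {ε : ℝ} (he₁ : e₁ ∈ H)
    (hH : ∀ e ∈ H.erase e₁, ¬ e₁ ⊆ e) (hf : ∀ e ∈ H, DependsOn (f e) (e : Set ι))
    (hf₁ : ∀ e ∈ H.erase e₁, ∀ x, |f e x| ≤ 1) (hdisc : SmallDisc e₁ (f e₁) ε) :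
    |𝔼 x, ∏ e ∈ H, f e x| ≤ ε := by
  have missed : ∀ e : H.erase e₁, ∃ j ∈ e₁, j ∉ e.1 := fun e => not_subset.1 (hH e.1 e.2)
  choose c hc hce using missed
  have frozen : ∀ y, |𝔼 x, ∏ e ∈ H, f e (e₁.piecewise x y)| ≤ ε := fun y => by
    have hprod : ∀ x, ∏ e ∈ H, f e (e₁.piecewise x y) =
        f e₁ x * ∏ j ∈ e₁, ∏ e : H.erase e₁ with c e = j, f e (e₁.piecewise x y) := fun x => by
      rw [prod_fiberwise_of_maps_to fun e _ => hc e, prod_coe_sort (H.erase e₁) fun e => f e _,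
        ← mul_prod_erase H _ he₁, hf e₁ he₁ fun i hi => e₁.piecewise_eq_of_mem x y hi]
    simp only [hprod]
    refine hdisc (fun j x => ∏ e : H.erase e₁ with c e = j, f e (e₁.piecewise x y))
      (fun j _ => dependsOn_prod fun e he x x' hx => ?_) fun j _ x => ?_
    · refine hf e (mem_of_mem_erase e.2) fun i hi => ?_
      have hij : i ≠ j := fun h => hce e ((mem_filter.1 he).2 ▸ h ▸ hi)
      by_cases hi₁ : i ∈ e₁
      · simpa [hi₁] using hx i (by simp [hi₁, hij])
      · simp [hi₁]
    · rw [abs_prod]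
      exact prod_le_one (fun _ _ => abs_nonneg _) fun e _ => hf₁ e e.2 _
  rw [← expect_expect_piecewise e₁, expect_comm]
  exact (abs_expect_le _ _).trans (expect_le univ_nonempty fun y _ => frozen y)

lemma exists_isMajorized_update_sq_expect_prod_le {e₂ : Finset ι} {η : ℝ}
    (hH : IsAntichain (· ⊆ ·) (H : Set (Finset ι))) (he₂ : e₂ ∈ H) (hN : LinForms H N η)
    (hη : η ≤ 1) (hf : IsMajorized H f N) :
    ∃ t, IsMajorized H (Function.update f e₂ t) (Function.update N e₂ 1) ∧
      (𝔼 x, ∏ e ∈ H, f e x) ^ 2 ≤ 2 * ((𝔼 x, ∏ e ∈ H, Function.update f e₂ t e x) +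
        densifyError (Fintype.card ι) η) := by
  have hins := insert_erase he₂
  obtain ⟨t, ht, ht₁, hle⟩ := exists_sq_expect_prod_le (H := H.erase e₂) (e₀ := e₂)
    (hins.symm ▸ hN) hη (hins.symm ▸ hf)
    (fun e he => hH (mem_of_mem_erase he) he₂ (ne_of_mem_erase he))
    (fun e he => hH he₂ (mem_of_mem_erase he) (ne_of_mem_erase he).symm)
  have hprod : ∀ x, t x * ∏ e ∈ H.erase e₂, f e x = ∏ e ∈ H, Function.update f e₂ t e x :=
    fun x => by
      rw [← mul_prod_erase H _ he₂, Function.update_self]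
      exact congrArg _ (prod_congr rfl fun e he => by
        rw [Function.update_of_ne (ne_of_mem_erase he)])
  refine ⟨t, hf.update_one ht ht₁, ?_⟩
  simpa only [hins, hprod] using hle

end

variable (ι)

/-- `S` contains the edges other than `e₁` whose majorants may be unbounded; densification
removes one of them at a time. -/
theorem exists_forall_abs_expect_prod_le (k : ℕ) {γ : ℝ} (hγ : 0 < γ) :
    ∃ δ > 0, ∀ (X : ι → Type*) [∀ i, Fintype (X i)] [∀ i, Nonempty (X i)]
      (H S : Finset (Finset ι)) (f N : Finset ι → (∀ i, X i) → ℝ) (e₁ : Finset ι),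
      IsAntichain (· ⊆ ·) (H : Set (Finset ι)) → e₁ ∈ H → S ⊆ H.erase e₁ → #S < k →
      (∀ e ∈ H.erase e₁, e ∉ S → ∀ x, N e x ≤ 1) → LinForms H N δ → IsMajorized H f N →
      SmallDisc e₁ (f e₁) δ → |𝔼 x, ∏ e ∈ H, f e x| ≤ γ := by
  induction k generalizing γ with
  | zero =>
    exact ⟨1, one_pos, fun X _ _ H S f N e₁ _ _ _ hS => absurd hS (Nat.not_lt_zero _)⟩
  | succ k ih =>
    obtain ⟨δ₀, hδ₀, ih⟩ := ih (γ := γ ^ 2 / 4) (by positivity)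
    obtain ⟨δ, ⟨⟨hδγ, hδδ₀⟩, hδ₁, herror⟩, hδ⟩ : ∃ δ : ℝ, ((δ ≤ γ ∧ δ ≤ δ₀) ∧ δ ≤ 1 ∧
        densifyError (Fintype.card ι) δ ≤ γ ^ 2 / 4) ∧ 0 < δ :=
      (((((eventually_le_nhds hγ).and (eventually_le_nhds hδ₀)).and
        ((eventually_le_nhds one_pos).and
          ((tendsto_densifyError _).eventually_le_const (by positivity)))).filter_mono
        nhdsWithin_le_nhds).and self_mem_nhdsWithin : ∀ᶠ δ in 𝓝[>] (0 : ℝ), _).exists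
    refine ⟨δ, hδ, fun X _ _ H S f N e₁ hH he₁ hS hSk hN₁ hN hf hdisc => ?_⟩
    obtain rfl | ⟨e₂, he₂S⟩ := S.eq_empty_or_nonempty
    · exact abs_expect_prod_le_of_smallDisc he₁
        (fun e he => hH he₁ (mem_of_mem_erase he) (ne_of_mem_erase he).symm) hf.dependsOn
        (fun e he x => (hf.abs_le e (mem_of_mem_erase he) x).trans
          (hN₁ e he (notMem_empty e) x)) (hdisc.mono hδγ)
    obtain ⟨hne, he₂⟩ := mem_erase.1 (hS he₂S)
    obtain ⟨t, ht, hle⟩ := exists_isMajorized_update_sq_expect_prod_le hH he₂ hN hδ₁ hf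
    have hcount := ih X H (S.erase e₂) _ _ e₁ hH he₁ ((erase_subset e₂ S).trans hS)
      ((card_erase_lt_of_mem he₂S).trans_le (Nat.lt_succ_iff.1 hSk))
      (fun e he heS x => by
        obtain rfl | h := eq_or_ne e e₂
        · simp
        · rw [Function.update_of_ne h]
          exact hN₁ e he (fun h' => heS (mem_erase.2 ⟨h, h'⟩)) x)
      ((hN.mono hδδ₀).update_one e₂) ht
      (by rw [Function.update_of_ne hne.symm]; exact hdisc.mono hδδ₀)
    refine abs_le_of_sq_le_sq (hle.trans ?_) hγ.le
    linarith [(abs_le.1 hcount).2]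

end Counting

/-- The difference which takes the place of one factor is halved so that it stays below any
common majorant of the two functions. -/
lemma abs_expect_prod_sub_expect_prod_le {α κ : Type*} [Fintype α] {H : Finset κ}
    {u v : κ → α → ℝ} {c : ℝ}
    (h : ∀ a ∈ H, ∀ w : κ → α → ℝ, (w a = fun x => (u a x - v a x) / 2) →
      (∀ b ∈ H, b ≠ a → w b = u b ∨ w b = v b) → |𝔼 x, ∏ b ∈ H, w b x| ≤ c) :
    |(𝔼 x, ∏ b ∈ H, u b x) - 𝔼 x, ∏ b ∈ H, v b x| ≤ #H * (2 * c) := by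
  classical
  suffices h' : ∀ T ⊆ H, |(𝔼 x, ∏ b ∈ H, u b x) - 𝔼 x, ∏ b ∈ H, T.piecewise v u b x| ≤
      #T * (2 * c) by
    have hv : ∀ x, ∏ b ∈ H, H.piecewise v u b x = ∏ b ∈ H, v b x := fun x =>
      prod_congr rfl fun b hb => by rw [piecewise_eq_of_mem _ _ _ hb]
    simpa only [hv] using h' H Subset.rfl
  intro T
  induction T using Finset.induction_on with
  | empty => simp
  | insert a T ha ih =>
    intro hT
    obtain ⟨haH, hTH⟩ := insert_subset_iff.1 hT
    let w : κ → α → ℝ := Function.update (T.piecewise v u) a fun x => (u a x - v a x) / 2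
    have hw := h a haH w (Function.update_self _ _ _) fun b _ hb => by
      simp only [w, Function.update_of_ne hb]
      by_cases hbT : b ∈ T <;> simp [hbT]
    have hdiff : (𝔼 x, ∏ b ∈ H, T.piecewise v u b x) -
        𝔼 x, ∏ b ∈ H, (insert a T).piecewise v u b x = 2 * 𝔼 x, ∏ b ∈ H, w b x := by
      rw [← expect_sub_distrib, mul_expect]
      refine expect_congr rfl fun x _ => ?_
      simp only [piecewise_insert, w, ← mul_prod_erase H _ haH, Function.update_self,
        piecewise_eq_of_notMem _ _ _ ha]
      have off_a : ∀ y : α → ℝ, ∏ b ∈ H.erase a, Function.update (T.piecewise v u) a y b x =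
          ∏ b ∈ H.erase a, T.piecewise v u b x := fun y =>
        prod_congr rfl fun b hb => by rw [Function.update_of_ne (ne_of_mem_erase hb)]
      rw [off_a, off_a]
      ring
    have htri := abs_sub_le (𝔼 x, ∏ b ∈ H, u b x) (𝔼 x, ∏ b ∈ H, T.piecewise v u b x)
      (𝔼 x, ∏ b ∈ H, (insert a T).piecewise v u b x)
    rw [hdiff, abs_mul, abs_two] at htri
    rw [card_insert_of_notMem ha]
    push_cast
    linarith [ih hTH]

/-! ### Transfer to weighted hypergraphs -/

lemma isMajorized_comp_restr {ι : Type} {X : ι → Type} {H : Finset (Finset ι)}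
    {ν : (e : Finset ι) → ((i : ↥e) → X i) → ℝ} {w : Finset ι → (∀ i, X i) → ℝ}
    (h : ∀ e ∈ H, ∃ u : ((i : ↥e) → X i) → ℝ,
      (w e = fun x => u (restr e x)) ∧ ∀ z, |u z| ≤ ν e z) :
    IsMajorized H w fun e x => ν e (restr e x) := by
  refine ⟨fun e he => ?_, fun e _ => dependsOn_comp_restr e (ν e), fun e he x => ?_⟩ <;>
    obtain ⟨u, hu, huν⟩ := h e he <;> rw [hu]
  exacts [dependsOn_comp_restr e u, huν _]

lemma HLinearForms.linForms [∀ j, Fintype (V j)] {H : Finset (Finset J)}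
    {ν : (e : Finset J) → ((i : ↥e) → V i) → ℝ} {η : ℝ} (h : HLinearForms H ν η) :
    LinForms H (fun e x => ν e (restr e x)) η := fun Ω hΩ => by
  let toBool (e S : Finset J) : ↥e → Bool := fun i => decide (i.1 ∈ S)
  have inj : ∀ e ∈ H, Set.InjOn (toBool e) (Ω e : Set (Finset J)) :=
    fun e he S hS T hT hST => by
      refine ext fun i => ?_
      by_cases hi : i ∈ e
      · simpa [toBool] using congrFun hST ⟨i, hi⟩
      · exact iff_of_false (fun h' => hi (hΩ e he S hS h')) fun h' => hi (hΩ e he T hT h')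
  have hprod : ∀ p q : (j : J) → V j, ∏ e ∈ H, ∏ S ∈ Ω e, ν e (restr e (S.piecewise q p)) =
      ∏ e ∈ H, ∏ ω : ↥e → Bool, if decide (ω ∈ (Ω e).image (toBool e)) then
        ν e fun i => if ω i then q i else p i else 1 := fun p q => by
    refine prod_congr rfl fun e he => ?_
    simp only [decide_eq_true_eq]
    rw [prod_ite_mem, univ_inter, prod_image (inj e he)]
    refine prod_congr rfl fun S _ => congrArg (ν e) (funext fun i => ?_)
    simp [restr, toBool, Finset.piecewise]
  simp only [hprod]
  have := h fun e ω => decide (ω ∈ (Ω e).image (toBool e))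
  rwa [avg_eq_expect, ← univ_product_univ, expect_product] at this

theorem counting_lemma_both_sparse_general (γ : ℝ) (hγ : 0 < γ)
    (J : Type) [Fintype J] [DecidableEq J] :
    ∃ ε : ℝ, 0 < ε ∧ ∃ η : ℝ, 0 < η ∧
    ∀ (V : J → Type) [∀ j, Fintype (V j)] [∀ j, Nonempty (V j)] (H : Finset (Finset J)),
      IsAntichain (· ⊆ ·) (H : Set (Finset J)) →
      ∀ ν g g' : (e : Finset J) → ((i : ↥e) → V i) → ℝ,
      HLinearForms H ν η →
      (∀ e ∈ H, ∀ x, |g e x| ≤ ν e x) → (∀ e ∈ H, ∀ x, |g' e x| ≤ ν e x) →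
      (∀ e ∈ H, EdgeDiscrepancy e (g e) (g' e) ε) →
      |avg (fun x : (j : J) → V j => ∏ e ∈ H, g e (restr e x)) -
        avg (fun x : (j : J) → V j => ∏ e ∈ H, g' e (restr e x))| ≤ γ := by
  set m := Fintype.card (Finset J)
  have hm : (0 : ℝ) < m := Nat.cast_pos.2 Fintype.card_pos
  obtain ⟨δ, hδ, hcount⟩ := exists_forall_abs_expect_prod_le J m (γ := γ / m / 2) (by positivity)
  refine ⟨δ / m, by positivity, δ, hδ, fun V _ _ H hH ν g g' hν hg hg' hdisc => ?_⟩
  simp only [avg_eq_expect]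
  have total : #H * (2 * (γ / m / 2)) ≤ γ :=
    calc #H * (2 * (γ / m / 2)) ≤ m * (2 * (γ / m / 2)) := by gcongr; exact H.card_le_univ
      _ = γ := by field_simp
  refine (abs_expect_prod_sub_expect_prod_le (u := fun e x => g e (restr e x))
    (v := fun e x => g' e (restr e x)) fun e₁ he₁ w hw₁ hw => ?_).trans total
  have factor : ∀ e ∈ H, ∃ u : ((i : ↥e) → V i) → ℝ,
      (w e = fun x => u (restr e x)) ∧ ∀ z, |u z| ≤ ν e z := fun e he => by
    obtain rfl | hne := eq_or_ne e e₁
    · refine ⟨fun z => (g e z - g' e z) / 2, hw₁, fun z => ?_⟩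
      rw [abs_div, abs_two]
      linarith [abs_sub (g e z) (g' e z), hg e he z, hg' e he z]
    · exact (hw e he hne).elim (fun h => ⟨g e, h, hg e he⟩) fun h => ⟨g' e, h, hg' e he⟩
  have two_pow_le : (2 : ℝ) ^ #e₁ ≤ m := by
    exact_mod_cast (card_powerset e₁).symm.trans_le e₁.powerset.card_le_univ
  have scale : 2 ^ #e₁ * (δ / m) / 2 ≤ δ :=
    calc 2 ^ #e₁ * (δ / m) / 2 ≤ m * (δ / m) / 2 := by gcongr
      _ ≤ δ := by rw [mul_div_cancel₀ _ hm.ne']; exact half_le_self hδ.le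
  exact hcount V H (H.erase e₁) w _ e₁ hH he₁ Subset.rfl
    ((card_erase_lt_of_mem he₁).trans_le H.card_le_univ) (fun e he he' => absurd he he')
    hν.linForms (isMajorized_comp_restr factor)
    (hw₁ ▸ ((hdisc e₁ he₁).smallDisc.div zero_le_two).mono scale)

/-- **Counting lemma, two sparse hypergraphs.** For every `γ > 0` and finite `J` there
exist `ε > 0` and `η > 0` such that: for every hypergraph system `(J, (V_j), r, H)` and
weighted hypergraphs `ν, g, g'` with `ν` satisfying the `H`-linear forms condition
within `η`, `0 ≤ g ≤ ν`, `0 ≤ g' ≤ ν`, and `(g, g')` an `ε`-discrepancy pair,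
`|E[∏_{e ∈ H} g_e(x_e)] - E[∏_{e ∈ H} g'_e(x_e)]| ≤ γ`. -/
theorem counting_lemma_both_sparse (γ : ℝ) (hγ : 0 < γ)
    (J : Type) [Fintype J] [DecidableEq J] :
    ∃ ε : ℝ, 0 < ε ∧ ∃ η : ℝ, 0 < η ∧
    ∀ (V : J → Type) [∀ j, Fintype (V j)] [∀ j, Nonempty (V j)]
      (r : ℕ), 1 ≤ r → ∀ H : Finset (Finset J), (∀ e ∈ H, e.card = r) →
      ∀ ν g g' : (e : Finset J) → ((i : ↥e) → V i) → ℝ,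
      HLinearForms H ν η →
      (∀ e ∈ H, ∀ x, 0 ≤ g e x ∧ g e x ≤ ν e x) →
      (∀ e ∈ H, ∀ x, 0 ≤ g' e x ∧ g' e x ≤ ν e x) →
      (∀ e ∈ H, EdgeDiscrepancy e (g e) (g' e) ε) →
      |avg (fun x : (j : J) → V j => ∏ e ∈ H, g e (restr e x)) -
        avg (fun x : (j : J) → V j => ∏ e ∈ H, g' e (restr e x))| ≤ γ := by
  obtain ⟨ε, hε, η, hη, hcount⟩ := counting_lemma_both_sparse_general γ hγ J
  refine ⟨ε, hε, η, hη, fun V _ _ r _ H hH ν g g' hν hg hg' =>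
    hcount V H (Set.Sized.isAntichain (r := r) hH) ν g g' hν ?_ ?_⟩
  exacts [fun e he x => (abs_of_nonneg (hg e he x).1).trans_le (hg e he x).2,
    fun e he x => (abs_of_nonneg (hg' e he x).1).trans_le (hg' e he x).2]
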